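/- Let p,q,r ≥ 2 be integers and T = Δ(p,q,r) with generators s₁,s₂. Let G be a group, let f be a central element of G, and let φ : G →* T be a surjective homomorphism whose kernel equals Subgroup.zpowers f. Let g₁, g₂ ∈ G with φ(g₁) = s₁ and φ(g₂) = s₂, and let S be a subset of Subgroup.zpowers f. Then (Subgroup.closure ({g₁, g₂} ∪ S)) ⊓ Subgroup.zpowers f = Subgroup.closure (S ∪ {g₁^p, g₂^q, (g₁g₂)^r}). -/

import Mathlib

/-! Write `N` for the right-hand subgroup. Its generators are killed by `φ`, so `N` lies in the
central subgroup `⟨f⟩ = ker φ` and is therefore normal in `G`. Let `L` be the homomorphism from the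
free group on two letters to `G` given by `g₁, g₂`; then `φ ∘ L` is the canonical projection onto
`Δ(p,q,r)`. An element of `⟨g₁, g₂, S⟩` has the form `L w * n` with `n ∈ N`. If it lies in `ker φ`,
then `w` projects to `1`, so `w` is in the normal closure of the relators. Since `L` sends the
relators into the normal subgroup `N`, it follows that `L w ∈ N`. -/

/-- Relators of the triangle group Δ(p,q,r). -/
def triangleRels (p q r : ℕ) : Set (FreeGroup (Fin 2)) :=
  {FreeGroup.of 0 ^ p, FreeGroup.of 1 ^ q, (FreeGroup.of 0 * FreeGroup.of 1) ^ r}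

/-- The triangle group Δ(p,q,r) = ⟨s₁,s₂ | s₁^p, s₂^q, (s₁s₂)^r⟩. -/
abbrev Triangle (p q r : ℕ) := PresentedGroup (triangleRels p q r)

/-- The generator s₁ of Δ(p,q,r). -/
def t₁ (p q r : ℕ) : Triangle p q r := PresentedGroup.of 0

/-- The generator s₂ of Δ(p,q,r). -/
def t₂ (p q r : ℕ) : Triangle p q r := PresentedGroup.of 1

theorem stmt14 (p q r : ℕ) (hp : 2 ≤ p) (hq : 2 ≤ q) (hr : 2 ≤ r)
    {G : Type*} [Group G] (f : G) (hf : f ∈ Subgroup.center G)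
    (φ : G →* Triangle p q r) (hsurj : Function.Surjective φ)
    (hker : φ.ker = Subgroup.zpowers f)
    (g₁ g₂ : G) (h₁ : φ g₁ = t₁ p q r) (h₂ : φ g₂ = t₂ p q r)
    (S : Set G) (hS : S ⊆ (Subgroup.zpowers f : Set G)) :
    Subgroup.closure ({g₁, g₂} ∪ S) ⊓ Subgroup.zpowers f =
      Subgroup.closure (S ∪ {g₁ ^ p, g₂ ^ q, (g₁ * g₂) ^ r}) := by
  set N := Subgroup.closure (S ∪ {g₁ ^ p, g₂ ^ q, (g₁ * g₂) ^ r}) with hN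
  let L : FreeGroup (Fin 2) →* G := FreeGroup.lift ![g₁, g₂]
  have hL0 : L (FreeGroup.of 0) = g₁ := by simp [L]
  have hL1 : L (FreeGroup.of 1) = g₂ := by simp [L]
  have hφL : φ.comp L = PresentedGroup.mk (triangleRels p q r) := by
    apply FreeGroup.ext_hom
    intro i
    fin_cases i
    · exact (congrArg φ hL0).trans h₁
    · exact (congrArg φ hL1).trans h₂
  have hφL' (w : FreeGroup (Fin 2)) : φ (L w) = PresentedGroup.mk (triangleRels p q r) w :=
    DFunLike.congr_fun hφL w
  have hrel {w : FreeGroup (Fin 2)} (hw : w ∈ triangleRels p q r) :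
      L w ∈ Subgroup.zpowers f := by
    rw [← hker, MonoidHom.mem_ker, hφL']
    exact PresentedGroup.one_of_mem hw
  have hSN {x : G} (hx : x ∈ S) : x ∈ N := Subgroup.subset_closure (Or.inl hx)
  have hNf : N ≤ Subgroup.zpowers f := by
    rw [hN, Subgroup.closure_le]
    rintro x (hx | rfl | rfl | rfl)
    · exact hS hx
    · simpa [hL0] using hrel (w := FreeGroup.of 0 ^ p) (by simp [triangleRels])
    · simpa [hL1] using hrel (w := FreeGroup.of 1 ^ q) (by simp [triangleRels])
    · have h : L ((FreeGroup.of 0 * FreeGroup.of 1) ^ r) ∈ Subgroup.zpowers f :=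
        hrel (by simp [triangleRels])
      rwa [map_pow, map_mul, hL0, hL1] at h
  have hfc : Subgroup.zpowers f ≤ Subgroup.center G := by
    rwa [Subgroup.zpowers_le]
  have hNn : N.Normal := ⟨fun n hn g => by
    rwa [Subgroup.mem_center_iff.1 (hfc (hNf hn)) g, mul_inv_cancel_right]⟩
  have hrelN : Subgroup.normalClosure (triangleRels p q r) ≤ N.comap L := by
    apply Subgroup.normalClosure_le_normal
    rintro w (rfl | rfl | rfl) <;>
      simp only [Subgroup.coe_comap, Set.mem_preimage, SetLike.mem_coe, map_pow, map_mul,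
        hL0, hL1] <;>
      exact Subgroup.subset_closure (by simp)
  apply le_antisymm
  · rintro x ⟨hx, hxf⟩
    have hle : Subgroup.closure ({g₁, g₂} ∪ S) ≤ L.range ⊔ N := by
      rw [Subgroup.closure_le]
      rintro y ((rfl | rfl) | hy)
      · exact Subgroup.mem_sup_left ⟨_, hL0⟩
      · exact Subgroup.mem_sup_left ⟨_, hL1⟩
      · exact Subgroup.mem_sup_right (hSN hy)
    obtain ⟨_, ⟨w, rfl⟩, n, hn, rfl⟩ := Subgroup.mem_sup_of_normal_right.1 (hle hx)
    have hLw : L w ∈ φ.ker := by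
      rw [hker]
      exact (Subgroup.mul_mem_cancel_right _ (hNf hn)).1 hxf
    rw [MonoidHom.mem_ker, hφL'] at hLw
    exact N.mul_mem (hrelN (PresentedGroup.mk_eq_one_iff.1 hLw)) hn
  · refine le_inf ?_ hNf
    have hg₁ : g₁ ∈ Subgroup.closure ({g₁, g₂} ∪ S) := Subgroup.subset_closure (by simp)
    have hg₂ : g₂ ∈ Subgroup.closure ({g₁, g₂} ∪ S) := Subgroup.subset_closure (by simp)
    rw [hN, Subgroup.closure_le]
    rintro x (hx | rfl | rfl | rfl)
    · exact Subgroup.subset_closure (Or.inr hx)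
    · exact pow_mem hg₁ p
    · exact pow_mem hg₂ q
    · exact pow_mem (mul_mem hg₁ hg₂) r
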